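/- arXiv:2407.13746 — 2 statements merged into one kernel-verified Lean document; each statement's English description precedes it below -/
import Mathlib

section
/- Let l ≥ 1, Y = {−1,+1}^l, p a conditional label distribution on Y, L̄ : Y × Y → [0,1] a multi-label loss, and c_{y'} = ∑_{y∈Y} p(y)·L̄(y', y). For a positive probability vector s on Y define the multi-label sum-exponential conditional error G_exp(s) = ∑_{y'∈Y} (1 − c_{y'})·(1/s_{y'} − 1). If ĥ ∈ Y satisfies s_{ĥ} = max_{y'∈Y} s_{y'}, then c_{ĥ} − min_{y'∈Y} c_{y'} ≤ 2·√( G_exp(s) − inf_{s'} G_exp(s') ), where the infimum is over all positive probability vectors s' on Y. -/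
noncomputable section
open Real

/-- Conditional cost `c_{y'} = ∑_y p(y) L̄(y', y)` of predicting the label vector `y'`. -/
def condCost {l : ℕ} (p : (Fin l → Bool) → ℝ)
    (L : (Fin l → Bool) → (Fin l → Bool) → ℝ) (y' : Fin l → Bool) : ℝ :=
  ∑ y, p y * L y' y

/-- The set of positive probability vectors on `Y = {−1,+1}^l`. -/
def probVecs (l : ℕ) : Set ((Fin l → Bool) → ℝ) :=
  {s | (∀ y', 0 < s y') ∧ ∑ y', s y' = 1}

/-- Multi-label sum-exponential conditional error
`G_exp(s) = ∑_{y'} (1 − c_{y'}) (1/s_{y'} − 1)`. -/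
def Gexp {l : ℕ} (c : (Fin l → Bool) → ℝ) (s : (Fin l → Bool) → ℝ) : ℝ :=
  ∑ y', (1 - c y') * (1 / s y' - 1)

/-!
Let `i` have smaller score than `j` but smaller cost too, and put `A = 1 - c i`, `B = 1 - c j`.
Since the smaller score sits on the larger weight, `A / s i + B / s j` is at least the value
`2 * (A + B) / (s i + s j)` of the even split of the mass `s i + s j`. The best split has value
`(√A + √B) ^ 2 / (s i + s j)`, so re-splitting this mass and leaving the other scores alone can gain
`(√A - √B) ^ 2 / (s i + s j)`. Since `s i + s j ≤ 1` and `√A + √B ≤ 2`, this is at least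
`(A - B) ^ 2 / 4`, where `A - B = c j - c i`.
-/

/-- The positive probability vectors on a finite type: the vectors of `stdSimplex ℝ ι` with no zero
coordinate. This is `probVecs` for an arbitrary label space. -/
def positiveSimplex (ι : Type*) [Fintype ι] : Set (ι → ℝ) :=
  {s | (∀ i, 0 < s i) ∧ ∑ i, s i = 1}

/-- The sum-exponential conditional error of the scores `s` for the costs `c`. This is `Gexp` for an
arbitrary label space. -/
def sumExpError {ι : Type*} [Fintype ι] (c s : ι → ℝ) : ℝ :=
  ∑ i, (1 - c i) * (1 / s i - 1)

section TwoPoint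

variable {A B u v : ℝ}

theorem two_mul_add_div_add_le_div_add_div (hA : 0 ≤ A) (hBA : B ≤ A) (hu : 0 < u) (huv : u ≤ v) :
    2 * (A + B) / (u + v) ≤ A / u + B / v := by
  have hv : 0 < v := hu.trans_le huv
  have gap : A / u + B / v - 2 * (A + B) / (u + v)
      = (v - u) * (A * (v - u) + (A - B) * u) / (u * v * (u + v)) := by
    field_simp
    ring
  have hvu : 0 ≤ v - u := sub_nonneg.2 huv
  have hcross : 0 ≤ A * (v - u) + (A - B) * u :=
    add_nonneg (mul_nonneg hA hvu) (mul_nonneg (sub_nonneg.2 hBA) hu.le)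
  rw [← sub_nonneg, gap]
  exact div_nonneg (mul_nonneg hvu hcross) (by positivity)

/-- The optimal proportion is `√A / (√A + √B) = 1 / 2 + (A - B) / (2 * (√A + √B) ^ 2)`. Replacing
`(√A + √B) ^ 2` by its upper bound `4` keeps both parts positive even when `B = 0`. -/
theorem div_half_add_add_div_half_sub_le (hA : A ∈ Set.Icc (0 : ℝ) 1) (hB : B ∈ Set.Icc (0 : ℝ) 1) :
    A / (1 / 2 + (A - B) / 8) + B / (1 / 2 - (A - B) / 8) ≤ 2 * (A + B) - (A - B) ^ 2 / 4 := by
  obtain ⟨hA0, hA1⟩ := hA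
  obtain ⟨hB0, hB1⟩ := hB
  have hplus : 0 < 4 + (A - B) := by linarith
  have hminus : 0 < 4 - (A - B) := by linarith
  have gain : 2 * (A + B) - (A / (1 / 2 + (A - B) / 8) + B / (1 / 2 - (A - B) / 8))
      = 2 * (A - B) ^ 2 * (4 - (A + B)) / ((4 + (A - B)) * (4 - (A - B))) := by
    rw [show 1 / 2 + (A - B) / 8 = (4 + (A - B)) / 8 by ring,
      show 1 / 2 - (A - B) / 8 = (4 - (A - B)) / 8 by ring]
    field_simp
    ring
  have hgain : (A - B) ^ 2 / 4
      ≤ 2 * (A - B) ^ 2 * (4 - (A + B)) / ((4 + (A - B)) * (4 - (A - B))) :=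
    calc (A - B) ^ 2 / 4 = 2 * (A - B) ^ 2 * 2 / 16 := by ring
      _ ≤ _ := by
        gcongr
        · exact mul_nonneg (by positivity) (by linarith)
        · linarith
        · nlinarith [sq_nonneg (A - B)]
  linarith

theorem exists_add_eq_and_div_add_div_le (hA : A ∈ Set.Icc (0 : ℝ) 1) (hB : B ∈ Set.Icc (0 : ℝ) 1)
    (hBA : B ≤ A) (hu : 0 < u) (huv : u ≤ v) (hsum : u + v ≤ 1) :
    ∃ x y : ℝ, 0 < x ∧ 0 < y ∧ x + y = u + v ∧
      A / x + B / y ≤ A / u + B / v - (A - B) ^ 2 / 4 := by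
  have hT : 0 < u + v := by linarith
  have hplus : 0 < 1 / 2 + (A - B) / 8 := by linarith [hA.1, hB.2]
  have hminus : 0 < 1 / 2 - (A - B) / 8 := by linarith [hA.2, hB.1]
  refine ⟨(1 / 2 + (A - B) / 8) * (u + v), (1 / 2 - (A - B) / 8) * (u + v),
    mul_pos hplus hT, mul_pos hminus hT, by ring, ?_⟩
  calc A / ((1 / 2 + (A - B) / 8) * (u + v)) + B / ((1 / 2 - (A - B) / 8) * (u + v))
      = (A / (1 / 2 + (A - B) / 8) + B / (1 / 2 - (A - B) / 8)) / (u + v) := by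
        rw [add_div, div_div, div_div]
    _ ≤ (2 * (A + B) - (A - B) ^ 2 / 4) / (u + v) := by
        gcongr
        exact div_half_add_add_div_half_sub_le hA hB
    _ = 2 * (A + B) / (u + v) - (A - B) ^ 2 / 4 / (u + v) := sub_div ..
    _ ≤ A / u + B / v - (A - B) ^ 2 / 4 :=
        sub_le_sub (two_mul_add_div_add_le_div_add_div hA.1 hBA hu huv)
          (le_div_self (by positivity) hT hsum)

end TwoPoint

theorem sum_sub_sum_update_update {ι α M : Type*} [Fintype ι] [DecidableEq ι] [AddCommGroup M]
    (F : ι → α → M) (s : ι → α) {i j : ι} (hij : i ≠ j) (x y : α) :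
    ∑ k, F k (s k) - ∑ k, F k (Function.update (Function.update s i x) j y k)
      = (F i (s i) - F i x) + (F j (s j) - F j y) := by
  rw [← Finset.sum_sub_distrib, Fintype.sum_eq_add i j hij]
  · simp only [Function.update_self, Function.update_of_ne hij]
  · rintro k ⟨hki, hkj⟩
    rw [Function.update_of_ne hkj, Function.update_of_ne hki, sub_self]

section Simplex

variable {ι : Type*} [Fintype ι] {c s : ι → ℝ} {i j : ι} {x y : ℝ}

theorem le_one_of_mem_positiveSimplex (hs : s ∈ positiveSimplex ι) (i : ι) : s i ≤ 1 :=
  hs.2 ▸ Finset.single_le_sum (fun k _ => (hs.1 k).le) (Finset.mem_univ i)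

theorem add_le_one_of_mem_positiveSimplex (hs : s ∈ positiveSimplex ι) (hij : i ≠ j) :
    s i + s j ≤ 1 := by
  classical
  rw [← hs.2, ← Finset.sum_pair hij]
  exact Finset.sum_le_sum_of_subset_of_nonneg (Finset.subset_univ _) fun k _ _ => (hs.1 k).le

theorem update_update_mem_positiveSimplex [DecidableEq ι] (hs : s ∈ positiveSimplex ι)
    (hij : i ≠ j) (hx : 0 < x) (hy : 0 < y) (hxy : x + y = s i + s j) :
    Function.update (Function.update s i x) j y ∈ positiveSimplex ι := by
  constructor
  · intro k
    simp only [Function.update_apply]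
    split_ifs
    exacts [hy, hx, hs.1 k]
  · have hsub := sum_sub_sum_update_update (fun _ r => r) s hij x y
    linarith [hs.2]

theorem sumExpError_sub_sumExpError_update_update [DecidableEq ι] (c s : ι → ℝ) (hij : i ≠ j)
    (x y : ℝ) :
    sumExpError c s - sumExpError c (Function.update (Function.update s i x) j y)
      = ((1 - c i) / s i + (1 - c j) / s j) - ((1 - c i) / x + (1 - c j) / y) := by
  unfold sumExpError
  rw [sum_sub_sum_update_update (fun k r => (1 - c k) * (1 / r - 1)) s hij x y]
  ring

theorem sumExpError_nonneg (hc : ∀ i, c i ≤ 1) (hs : s ∈ positiveSimplex ι) :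
    0 ≤ sumExpError c s :=
  Finset.sum_nonneg fun i _ => mul_nonneg (sub_nonneg.2 (hc i)) <|
    sub_nonneg.2 <| (one_le_div (hs.1 i)).2 (le_one_of_mem_positiveSimplex hs i)

theorem sInf_sumExpError_le (hc : ∀ i, c i ≤ 1) (hs : s ∈ positiveSimplex ι) :
    sInf (sumExpError c '' positiveSimplex ι) ≤ sumExpError c s :=
  csInf_le ⟨0, Set.forall_mem_image.2 fun _ => sumExpError_nonneg hc⟩ (Set.mem_image_of_mem _ hs)

theorem exists_sumExpError_le_sub_sq (hc : ∀ i, c i ∈ Set.Icc (0 : ℝ) 1)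
    (hs : s ∈ positiveSimplex ι) (hcij : c i < c j) (hsij : s i ≤ s j) :
    ∃ t ∈ positiveSimplex ι, sumExpError c t ≤ sumExpError c s - (c j - c i) ^ 2 / 4 := by
  classical
  have hij : i ≠ j := by
    rintro rfl
    exact hcij.false
  obtain ⟨x, y, hx, hy, hxy, hle⟩ := exists_add_eq_and_div_add_div_le
    (Set.Icc.mem_iff_one_sub_mem.1 (hc i)) (Set.Icc.mem_iff_one_sub_mem.1 (hc j))
    (sub_le_sub_left hcij.le 1) (hs.1 i) hsij (add_le_one_of_mem_positiveSimplex hs hij)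
  refine ⟨_, update_update_mem_positiveSimplex hs hij hx hy hxy, ?_⟩
  rw [sub_sub_sub_cancel_left] at hle
  linarith [sumExpError_sub_sumExpError_update_update c s hij x y]

theorem comp_bound_sum_exponential_general (hc : ∀ i, c i ∈ Set.Icc (0 : ℝ) 1)
    (hs : s ∈ positiveSimplex ι) (hsij : s i ≤ s j) :
    c j - c i ≤ 2 * √(sumExpError c s - sInf (sumExpError c '' positiveSimplex ι)) := by
  obtain hcij | hcij := le_or_gt (c j) (c i)
  · exact (sub_nonpos.2 hcij).trans (by positivity)
  obtain ⟨t, ht, hle⟩ := exists_sumExpError_le_sub_sq hc hs hcij hsij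
  have hinf := sInf_sumExpError_le (fun k => (hc k).2) ht
  have hsq : ((c j - c i) / 2) ^ 2
      ≤ sumExpError c s - sInf (sumExpError c '' positiveSimplex ι) := by
    linarith [div_pow (c j - c i) 2 2]
  linarith [Real.le_sqrt_of_sq_le hsq]

end Simplex

theorem condCost_mem_Icc {l : ℕ} {p : (Fin l → Bool) → ℝ}
    {L : (Fin l → Bool) → (Fin l → Bool) → ℝ} (hp0 : ∀ y, 0 ≤ p y) (hp1 : ∑ y, p y = 1)
    {y' : Fin l → Bool} (hL : ∀ y, L y' y ∈ Set.Icc (0 : ℝ) 1) :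
    condCost p L y' ∈ Set.Icc (0 : ℝ) 1 :=
  (convex_Icc 0 1).sum_mem (fun y _ => hp0 y) hp1 fun y _ => hL y

theorem comp_bound_sum_exponential (l : ℕ) (hl : 1 ≤ l)
    (p : (Fin l → Bool) → ℝ) (hp0 : ∀ y, 0 ≤ p y) (hp1 : ∑ y, p y = 1)
    (L : (Fin l → Bool) → (Fin l → Bool) → ℝ)
    (hL : ∀ y' y, L y' y ∈ Set.Icc (0 : ℝ) 1)
    (s : (Fin l → Bool) → ℝ) (hs : s ∈ probVecs l)
    (hhat : Fin l → Bool) (hmax : ∀ y', s y' ≤ s hhat) :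
    condCost p L hhat - ⨅ y' : Fin l → Bool, condCost p L y'
      ≤ 2 * Real.sqrt (Gexp (condCost p L) s
          - sInf ((fun s' => Gexp (condCost p L) s') '' probVecs l)) := by
  obtain ⟨b, hb⟩ := exists_eq_ciInf_of_finite (f := condCost p L)
  exact hb ▸ comp_bound_sum_exponential_general
    (fun y' => condCost_mem_Icc hp0 hp1 (hL y')) hs (hmax b)
end
end

section
/- Let l ≥ 1, Y = {−1,+1}^l, p a conditional label distribution on Y, L̄ : Y × Y → [0,1] a multi-label loss, c_{y'} = ∑_{y∈Y} p(y)·L̄(y', y), and ρ > 0. For a centered score vector z on Y define the multi-label constrained ρ-margin conditional error G(z) = ∑_{y'∈Y} c_{y'}·min( max(0, 1 + z_{y'}/ρ), 1 ). If ĥ ∈ Y satisfies z_{ĥ} = max_{y'∈Y} z_{y'}, then c_{ĥ} − min_{y'∈Y} c_{y'} ≤ G(z) − inf_{z'} G(z'), where the infimum is over all centered score vectors z' on Y. -/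
noncomputable section
open Real

/-- The set of centered score vectors on `Y = {−1,+1}^l` (zero-sum constraint). -/
def centeredVecs (l : ℕ) : Set ((Fin l → Bool) → ℝ) :=
  {z | ∑ y', z y' = 0}

/-- Multi-label constrained ρ-margin conditional error
`G(z) = ∑_{y'} c_{y'} min(max(0, 1 + z_{y'}/ρ), 1)`. -/
def GcstndMargin {l : ℕ} (ρ : ℝ) (c : (Fin l → Bool) → ℝ) (z : (Fin l → Bool) → ℝ) : ℝ :=
  ∑ y', c y' * min (max 0 (1 + z y' / ρ)) 1

/-!
The Bayes conditional cost `min c` bounds the surrogate infimum from above: the centered score that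
puts mass `(n - 1) ρ` on a label `i` and `-ρ` on each of the others has surrogate error exactly
`c i`, since the loss vanishes at margin `ρ` and equals `1` at nonpositive margins. On the other
hand, the largest entry of a centered score is nonnegative, so the predicted label alone already
contributes its full cost to the surrogate error.
-/

theorem nonneg_of_sum_nonneg_of_forall_le {ι M : Type*} [Fintype ι] [AddCommMonoid M]
    [LinearOrder M] [IsOrderedCancelAddMonoid M] {f : ι → M} {j : ι} (hsum : 0 ≤ ∑ i, f i)
    (hj : ∀ i, f i ≤ f j) : 0 ≤ f j := by
  have hzero_le : ∑ _i : ι, (0 : M) ≤ ∑ i, f i := Finset.sum_const_zero.trans_le hsum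
  obtain ⟨i, -, hi⟩ := Finset.exists_le_of_sum_le ⟨j, Finset.mem_univ j⟩ hzero_le
  exact hi.trans (hj i)

section ConstrainedLoss

variable {ι : Type*} [Fintype ι] {Φ : ℝ → ℝ} {c z : ι → ℝ} {r : ℝ} {j : ι}

/-- The score vectors allowed by the zero-sum constraint, over an arbitrary finite label set. -/
def centeredScores (ι : Type*) [Fintype ι] : Set (ι → ℝ) :=
  {z | ∑ i, z i = 0}

/-- The conditional error of the constrained surrogate loss with margin function `Φ`: label `i`
has cost `c i` and margin `-z i`. -/
def constrainedError (Φ : ℝ → ℝ) (c z : ι → ℝ) : ℝ :=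
  ∑ i, c i * Φ (-z i)

open Classical in
/-- The centered score vector that favours the single label `i` and gives every other label
margin `r`. -/
def favoringScore (r : ℝ) (i : ι) : ι → ℝ :=
  Pi.single i (Fintype.card ι * r) - Function.const ι r

theorem favoringScore_mem_centeredScores (r : ℝ) (i : ι) :
    favoringScore r i ∈ centeredScores ι := by
  simp [favoringScore, centeredScores]

theorem favoringScore_self (r : ℝ) (i : ι) :
    favoringScore r i i = (Fintype.card ι - 1) * r := by
  simp [favoringScore, sub_mul]

theorem favoringScore_of_ne (r : ℝ) {i k : ι} (hki : k ≠ i) : favoringScore r i k = -r := by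
  simp [favoringScore, hki]

theorem constrainedError_nonneg (hc : ∀ i, 0 ≤ c i) (hΦ : ∀ u, 0 ≤ Φ u) (z : ι → ℝ) :
    0 ≤ constrainedError Φ c z :=
  Finset.sum_nonneg fun i _ => mul_nonneg (hc i) (hΦ (-z i))

theorem le_constrainedError (hc : ∀ i, 0 ≤ c i) (hΦ : ∀ u, 0 ≤ Φ u) (hj : 1 ≤ Φ (-z j)) :
    c j ≤ constrainedError Φ c z :=
  calc
    c j ≤ c j * Φ (-z j) := le_mul_of_one_le_right (hc j) hj
    _ ≤ constrainedError Φ c z :=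
      Finset.single_le_sum (f := fun i => c i * Φ (-z i))
        (fun i _ => mul_nonneg (hc i) (hΦ (-z i))) (Finset.mem_univ j)

theorem constrainedError_favoringScore (c : ι → ℝ) (hΦ_one : ∀ u ≤ 0, Φ u = 1) (hΦ_zero : Φ r = 0)
    (i : ι) : constrainedError Φ c (favoringScore r i) = c i := by
  have hr : 0 ≤ r := by
    by_contra! hneg
    exact zero_ne_one (hΦ_zero.symm.trans (hΦ_one r hneg.le))
  have hcard : (1 : ℝ) ≤ Fintype.card ι := by
    exact_mod_cast Fintype.card_pos_iff.mpr ⟨i⟩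
  have hself : Φ (-favoringScore r i i) = 1 := by
    refine hΦ_one _ (neg_nonpos.mpr ?_)
    rw [favoringScore_self]
    exact mul_nonneg (sub_nonneg.mpr hcard) hr
  rw [constrainedError, Fintype.sum_eq_single i, hself, mul_one]
  intro k hki
  rw [favoringScore_of_ne r hki, neg_neg, hΦ_zero, mul_zero]

theorem sInf_constrainedError_le_iInf [Nonempty ι] (hc : ∀ i, 0 ≤ c i) (hΦ : ∀ u, 0 ≤ Φ u)
    (hΦ_one : ∀ u ≤ 0, Φ u = 1) (hΦ_zero : Φ r = 0) :
    sInf (constrainedError Φ c '' centeredScores ι) ≤ ⨅ i, c i := by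
  have hbdd : BddBelow (constrainedError Φ c '' centeredScores ι) :=
    ⟨0, Set.forall_mem_image.mpr fun w _ => constrainedError_nonneg hc hΦ w⟩
  refine le_ciInf fun i => csInf_le hbdd ?_
  exact ⟨favoringScore r i, favoringScore_mem_centeredScores r i,
    constrainedError_favoringScore c hΦ_one hΦ_zero i⟩

theorem cstnd_bound_rho_margin_general (hc : ∀ i, 0 ≤ c i) (hΦ : ∀ u, 0 ≤ Φ u)
    (hΦ_one : ∀ u ≤ 0, Φ u = 1) (hΦ_zero : Φ r = 0) (hz : z ∈ centeredScores ι)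
    (hj : ∀ i, z i ≤ z j) :
    c j - ⨅ i, c i
      ≤ constrainedError Φ c z - sInf (constrainedError Φ c '' centeredScores ι) := by
  have : Nonempty ι := ⟨j⟩
  have hzj : 0 ≤ z j := nonneg_of_sum_nonneg_of_forall_le (Eq.ge hz) hj
  exact sub_le_sub (le_constrainedError hc hΦ (hΦ_one _ (neg_nonpos.mpr hzj)).ge)
    (sInf_constrainedError_le_iInf hc hΦ hΦ_one hΦ_zero)

end ConstrainedLoss

section RhoMargin

variable {ρ u : ℝ}

/-- The `ρ`-margin loss `Φ(u) = min(max(0, 1 - u/ρ), 1)`. -/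
def rhoMarginLoss (ρ u : ℝ) : ℝ :=
  min (max 0 (1 - u / ρ)) 1

theorem rhoMarginLoss_nonneg (ρ u : ℝ) : 0 ≤ rhoMarginLoss ρ u :=
  le_min (le_max_left _ _) zero_le_one

theorem rhoMarginLoss_of_nonpos (hρ : 0 ≤ ρ) (hu : u ≤ 0) : rhoMarginLoss ρ u = 1 := by
  have hdiv : u / ρ ≤ 0 := div_nonpos_of_nonpos_of_nonneg hu hρ
  exact min_eq_right (le_max_of_le_right (by linarith))

theorem rhoMarginLoss_self (hρ : ρ ≠ 0) : rhoMarginLoss ρ ρ = 0 := by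
  simp [rhoMarginLoss, div_self hρ]

theorem gcstndMargin_eq_constrainedError {l : ℕ} (ρ : ℝ) (c : (Fin l → Bool) → ℝ) :
    GcstndMargin ρ c = constrainedError (rhoMarginLoss ρ) c := by
  funext z
  simp only [GcstndMargin, constrainedError, rhoMarginLoss, neg_div, sub_neg_eq_add]

end RhoMargin

theorem condCost_nonneg {l : ℕ} {p : (Fin l → Bool) → ℝ}
    {L : (Fin l → Bool) → (Fin l → Bool) → ℝ} {y' : Fin l → Bool} (hp : ∀ y, 0 ≤ p y)
    (hL : ∀ y, 0 ≤ L y' y) : 0 ≤ condCost p L y' :=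
  Finset.sum_nonneg fun y _ => mul_nonneg (hp y) (hL y)

theorem cstnd_bound_rho_margin (l : ℕ) (hl : 1 ≤ l)
    (p : (Fin l → Bool) → ℝ) (hp0 : ∀ y, 0 ≤ p y) (hp1 : ∑ y, p y = 1)
    (L : (Fin l → Bool) → (Fin l → Bool) → ℝ)
    (hL : ∀ y' y, L y' y ∈ Set.Icc (0 : ℝ) 1)
    (ρ : ℝ) (hρ : 0 < ρ)
    (z : (Fin l → Bool) → ℝ) (hz : z ∈ centeredVecs l)
    (hhat : Fin l → Bool) (hmax : ∀ y', z y' ≤ z hhat) :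
    condCost p L hhat - ⨅ y' : Fin l → Bool, condCost p L y'
      ≤ GcstndMargin ρ (condCost p L) z
          - sInf ((fun z' => GcstndMargin ρ (condCost p L) z') '' centeredVecs l) := by
  have hc (y' : Fin l → Bool) : 0 ≤ condCost p L y' := condCost_nonneg hp0 fun y => (hL y' y).1
  rw [gcstndMargin_eq_constrainedError]
  exact cstnd_bound_rho_margin_general hc (rhoMarginLoss_nonneg ρ)
    (fun _ => rhoMarginLoss_of_nonpos hρ.le) (rhoMarginLoss_self hρ.ne') hz hmax
end
end
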